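/- For t → ∞, the constant C₂ in the connection formula C₂(t) − Υ₂(k) ≈ −∫_{√t}^{k√t} e^{ts − s³/3}·(Ai(t)·s − Ai'(t)) ds (for fixed k > 1) has the asymptotic expansion C₂(t) − Υ₂(k) = −1/2 − (1/(12√π))·t^{−3/4} + (35/(1728√π))·t^{−9/4} + O(t^{−15/4}), obtained by substituting s = √t(1+r), expanding e^{(2/3)t^{3/2} − t^{3/2}r² − (1/3)t^{3/2}r³} as e^{−t^{3/2}r²}(1 − (1/3)t^{3/2}r³ + …)e^{(2/3)t^{3/2}}, and evaluating the resulting Gaussian integrals over r ∈ (0, ∞), using Ai(t) ~ (2√π)^{-1}t^{-1/4}e^{−(2/3)t^{3/2}} and Ai'(t) ~ −(2√π)^{-1}t^{1/4}e^{−(2/3)t^{3/2}}. -/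

import Mathlib

open Real Filter Asymptotics

/-
In the variable `x = t ^ (3 / 2)` the Airy equation becomes a first-order system for the amplitudes
`P` and `Q`, the quotients of `Ai` and `Ai'` by their leading terms (for `Ai'` this quotient tends
to `1` by L'Hôpital's rule). In this system `P - Q` solves `f' = 4 / 3 * f + r`, and a solution that
does not grow like `exp (4 / 3 * x)` is as small as `r`; iterating the estimate gives
`P - Q = -1 / (4 * x) + 35 / (192 * x ^ 2) + O(x⁻³)`. After integration by parts the derivative of
the connection integral collapses to `x ^ (-1 / 2) * (P - Q) / (6 * √π)` up to exponentially small
terms. Integrating from infinity, where Laplace's method gives the limit `1 / 2`, yields the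
expansion.
-/

open Set MeasureTheory
open scoped Topology

lemma isEquivalent_of_isBigO_div_sub_one {α : Type*} {l : Filter α} {u v g : α → ℝ}
    (h : (fun x => u x / v x - 1) =O[l] g) (hg : Tendsto g l (𝓝 0)) : u ~[l] v :=
  isEquivalent_of_tendsto_one (by simpa [Pi.div_def] using (h.trans_tendsto hg).add_const 1)

section GrowthAtInfinity

variable {E : Type*} [NormedAddCommGroup E] [NormedSpace ℝ E] {f f' : ℝ → E} {g g' : ℝ → ℝ}

lemma isBigO_of_hasDerivAt_isBigO (hf : ∀ᶠ x in atTop, HasDerivAt f (f' x) x)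
    (hg : ∀ᶠ x in atTop, HasDerivAt g (g' x) x) (hg' : ∀ᶠ x in atTop, g' x ≤ 0)
    (hf0 : Tendsto f atTop (𝓝 0)) (hg0 : Tendsto g atTop (𝓝 0)) (h : f' =O[atTop] g') :
    f =O[atTop] g := by
  obtain ⟨C, hC₀, hC⟩ := h.exists_nonneg
  obtain ⟨T, hT⟩ := eventually_atTop.1 (hf.and (hg.and (hg'.and hC.bound)))
  have increment_le {x y : ℝ} (hx : T ≤ x) (hxy : x ≤ y) : ‖f y - f x‖ ≤ C * (g x - g y) := by
    refine image_norm_le_of_norm_deriv_right_le_deriv_boundary' (f := fun y => f y - f x)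
      (B := fun y => C * (g x - g y)) (a := x) (b := y) (f' := f') (B' := fun y => C * -g' y)
      (fun z hz => ?_) (fun z hz => ?_) (by simp) (fun z hz => ?_) (fun z hz => ?_)
      (fun z hz => ?_) (right_mem_Icc.2 hxy)
    all_goals obtain ⟨hfz, hgz, hgz', hCz⟩ := hT z (hx.trans hz.1)
    · exact (hfz.sub_const _).continuousAt.continuousWithinAt
    · exact (hfz.sub_const _).hasDerivWithinAt
    · exact ((hgz.const_sub _).const_mul _).continuousAt.continuousWithinAt
    · exact ((hgz.const_sub _).const_mul _).hasDerivWithinAt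
    · rwa [Real.norm_of_nonpos hgz'] at hCz
  refine IsBigO.of_bound C ?_
  filter_upwards [eventually_ge_atTop T] with x hx
  have hlim : ‖f x‖ ≤ C * g x := by
    have hf_lim := (hf0.sub_const (f x)).norm
    have hg_lim := (hg0.const_sub (g x)).const_mul C
    rw [zero_sub, norm_neg] at hf_lim
    rw [sub_zero] at hg_lim
    refine le_of_tendsto_of_tendsto hf_lim hg_lim ?_
    filter_upwards [eventually_ge_atTop x] with y hxy using increment_le hx hxy
  exact hlim.trans (mul_le_mul_of_nonneg_left (le_abs_self _) hC₀)

lemma isBigO_of_hasDerivAt_smul_add {r : ℝ → E} {c : ℝ} (hc : 0 < c)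
    (hf : ∀ᶠ x in atTop, HasDerivAt f (c • f x + r x) x)
    (hg : ∀ᶠ x in atTop, HasDerivAt g (g' x) x) (hg' : ∀ᶠ x in atTop, g' x ≤ 0)
    (hg_nonneg : ∀ᶠ x in atTop, 0 ≤ g x) (hf_exp : f =o[atTop] fun x => exp (c * x))
    (hg_exp : g =o[atTop] fun x => exp (c * x)) (hr : r =O[atTop] g) : f =O[atTop] g := by
  have hexp (x : ℝ) : HasDerivAt (fun x => exp (-(c * x))) (-c * exp (-(c * x))) x :=
    (((hasDerivAt_id x).const_mul c).neg.exp).congr_deriv (by simp [mul_comm])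
  have hweighted : (fun x => exp (-(c * x)) • f x) =O[atTop] fun x => exp (-(c * x)) * g x := by
    refine isBigO_of_hasDerivAt_isBigO (f' := fun x => exp (-(c * x)) • r x)
      (g' := fun x => exp (-(c * x)) * (g' x - c * g x)) ?_ ?_ ?_ ?_ ?_ ?_
    · filter_upwards [hf] with x hfx
      refine ((hexp x).smul hfx).congr_deriv ?_
      module
    · filter_upwards [hg] with x hgx
      exact ((hexp x).mul hgx).congr_deriv (by ring)
    · filter_upwards [hg', hg_nonneg] with x hgx' hgx
      exact mul_nonpos_of_nonneg_of_nonpos (exp_pos _).le (by nlinarith)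
    · rw [tendsto_zero_iff_norm_tendsto_zero]
      refine (hf_exp.norm_left.tendsto_div_nhds_zero).congr fun x => ?_
      rw [norm_smul, Real.norm_of_nonneg (exp_pos _).le, exp_neg, div_eq_inv_mul]
    · refine hg_exp.tendsto_div_nhds_zero.congr fun x => ?_
      rw [exp_neg, div_eq_inv_mul]
    · refine (isBigO_refl (fun x => exp (-(c * x))) _).smul (hr.trans (IsBigO.of_bound c⁻¹ ?_))
      filter_upwards [hg', hg_nonneg] with x hgx' hgx
      rw [Real.norm_of_nonneg hgx, Real.norm_of_nonpos (by nlinarith), le_inv_mul_iff₀ hc]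
      linarith
  refine ((isBigO_refl (fun x => exp (c * x)) _).smul hweighted).congr (fun x => ?_) fun x => ?_
  · rw [smul_smul, ← exp_add, add_neg_cancel, exp_zero, one_smul]
  · rw [smul_eq_mul, ← mul_assoc, ← exp_add, add_neg_cancel, exp_zero, one_mul]

lemma tendsto_zero_of_monotoneOn_hasDerivAt {f f' : ℝ → ℝ} {T l : ℝ}
    (hf : ∀ x ≥ T, HasDerivAt f (f' x) x) (hf' : MonotoneOn f' (Ici T))
    (hl : Tendsto f atTop (𝓝 l)) : Tendsto f' atTop (𝓝 0) := by
  have increment {x : ℝ} (hx : T ≤ x) : ∃ ξ ∈ Ioo x (x + 1), f' ξ = f (x + 1) - f x := by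
    obtain ⟨ξ, hξ, hslope⟩ := exists_hasDerivAt_eq_slope f f' (lt_add_one x)
      (fun y hy => (hf y (hx.trans hy.1)).continuousAt.continuousWithinAt)
      fun y hy => hf y (hx.trans hy.1.le)
    exact ⟨ξ, hξ, by simpa using hslope⟩
  have hlower : Tendsto (fun x => f x - f (x - 1)) atTop (𝓝 0) := by
    simpa [sub_eq_add_neg] using
      hl.sub (hl.comp (tendsto_atTop_add_const_right _ (-1) tendsto_id))
  have hupper : Tendsto (fun x => f (x + 1) - f x) atTop (𝓝 0) := by
    simpa using (hl.comp (tendsto_atTop_add_const_right _ 1 tendsto_id)).sub hl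
  refine tendsto_of_tendsto_of_tendsto_of_le_of_le' hlower hupper ?_ ?_
  · filter_upwards [eventually_ge_atTop (T + 1)] with x hx
    obtain ⟨ξ, hξ, hslope⟩ := increment (le_sub_iff_add_le.2 hx)
    rw [sub_add_cancel] at hξ hslope
    rw [← hslope]
    exact hf' (mem_Ici.2 (by linarith [hξ.1])) (mem_Ici.2 (by linarith)) hξ.2.le
  · filter_upwards [eventually_ge_atTop T] with x hx
    obtain ⟨ξ, hξ, hslope⟩ := increment hx
    rw [← hslope]
    exact hf' hx (hx.trans hξ.1.le) hξ.1.le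

lemma hasDerivAt_inv_pow (n : ℕ) {x : ℝ} (hx : x ≠ 0) :
    HasDerivAt (fun x : ℝ => (x ^ n)⁻¹) (-(n : ℝ) * (x ^ (n + 1))⁻¹) x := by
  have h := hasDerivAt_zpow (-n : ℤ) x (.inl hx)
  simp only [zpow_neg, zpow_natCast] at h
  refine h.congr_deriv ?_
  rw [show (-(n : ℤ) - 1) = -((n + 1 : ℕ) : ℤ) by push_cast; ring, zpow_neg, zpow_natCast]
  push_cast
  rfl

lemma tendsto_inv_pow_atTop {n : ℕ} (hn : n ≠ 0) :
    Tendsto (fun x : ℝ => (x ^ n)⁻¹) atTop (𝓝 0) :=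
  (tendsto_pow_atTop hn).inv_tendsto_atTop

lemma isBigO_inv_pow_of_hasDerivAt (n : ℕ) (hf : ∀ᶠ x in atTop, HasDerivAt f (f' x) x)
    (hf₀ : Tendsto f atTop (𝓝 0)) (hf' : f' =O[atTop] fun x => (x ^ (n + 2))⁻¹) :
    f =O[atTop] fun x => (x ^ (n + 1))⁻¹ := by
  refine isBigO_of_hasDerivAt_isBigO hf
    ((eventually_ne_atTop 0).mono fun x hx => hasDerivAt_inv_pow (n + 1) hx) ?_ hf₀
    (tendsto_inv_pow_atTop n.succ_ne_zero)
    (hf'.const_mul_right (neg_ne_zero.2 (Nat.cast_ne_zero.2 n.succ_ne_zero)))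
  filter_upwards [eventually_ge_atTop 0] with x hx
  exact mul_nonpos_of_nonpos_of_nonneg (neg_nonpos.2 (Nat.cast_nonneg _)) (by positivity)

lemma isBigO_inv_pow_of_hasDerivAt_smul_add (n : ℕ) {r : ℝ → E} {c : ℝ} (hc : 0 < c)
    (hf : ∀ᶠ x in atTop, HasDerivAt f (c • f x + r x) x) (hf₀ : Tendsto f atTop (𝓝 0))
    (hr : r =O[atTop] fun x => (x ^ n)⁻¹) : f =O[atTop] fun x => (x ^ n)⁻¹ := by
  have hexp : (fun _ => 1 : ℝ → ℝ) =o[atTop] fun x => exp (c * x) := by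
    simpa using isLittleO_pow_exp_pos_mul_atTop 0 hc
  refine isBigO_of_hasDerivAt_smul_add hc hf
    ((eventually_ne_atTop 0).mono fun x hx => hasDerivAt_inv_pow n hx) ?_ ?_
    ((hf₀.isBigO_one ℝ).trans_isLittleO hexp) (IsBigO.trans_isLittleO ?_ hexp) hr
  · filter_upwards [eventually_ge_atTop 0] with x hx
    exact mul_nonpos_of_nonpos_of_nonneg (neg_nonpos.2 (Nat.cast_nonneg _)) (by positivity)
  · filter_upwards [eventually_ge_atTop 0] with x hx using by positivity
  · refine IsBigO.of_bound 1 ?_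
    filter_upwards [eventually_ge_atTop 1] with x hx
    rw [norm_one, mul_one, Real.norm_of_nonneg (by positivity)]
    exact inv_le_one_of_one_le₀ (one_le_pow₀ hx)

lemma isBigO_inv_pow_succ_div {f : ℝ → ℝ} {n : ℕ} (hf : f =O[atTop] fun x => (x ^ n)⁻¹) (c : ℝ) :
    (fun x => f x / (c * x)) =O[atTop] fun x => (x ^ (n + 1))⁻¹ := by
  refine ((hf.mul (isBigO_refl (fun x => x⁻¹) _)).const_mul_left c⁻¹).congr
    (fun x => ?_) fun x => ?_
  · rw [div_eq_mul_inv, mul_inv]; ring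
  · rw [pow_succ, mul_inv]

lemma isBigO_exp_neg_mul_inv_pow {c : ℝ} (hc : 0 < c) (n : ℕ) :
    (fun x => exp (-(x * c))) =O[atTop] fun x => (x ^ n)⁻¹ := by
  have h := (isLittleO_pow_exp_pos_mul_atTop n hc).isBigO.inv_rev
    ((eventually_ne_atTop 0).mono fun x hx h0 => absurd h0 (pow_ne_zero n hx))
  refine h.congr_left fun x => ?_
  rw [← exp_neg, mul_comm]

end GrowthAtInfinity

/-- The differential system in `x = t ^ (3 / 2)` satisfied by the normalised amplitudes of a
decaying solution `y` of the Airy equation: `P` stands for `y` and `Q` for `-y'`, each divided by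
its leading asymptotic term. -/
structure IsAiryAmplitudePair (P Q : ℝ → ℝ) : Prop where
  hasDerivAt_fst : ∀ᶠ x in atTop, HasDerivAt P (P x / (6 * x) + 2 / 3 * (P x - Q x)) x
  hasDerivAt_snd : ∀ᶠ x in atTop, HasDerivAt Q (-Q x / (6 * x) + 2 / 3 * (Q x - P x)) x
  tendsto_fst : Tendsto P atTop (𝓝 1)
  tendsto_snd : Tendsto Q atTop (𝓝 1)

namespace IsAiryAmplitudePair

variable {P Q : ℝ → ℝ}

lemma hasDerivAt_sub (h : IsAiryAmplitudePair P Q) : ∀ᶠ x in atTop,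
    HasDerivAt (fun x => P x - Q x) (4 / 3 * (P x - Q x) + (P x + Q x) / (6 * x)) x := by
  filter_upwards [h.hasDerivAt_fst, h.hasDerivAt_snd] with x hP hQ
  exact (hP.sub hQ).congr_deriv (by ring)

lemma hasDerivAt_add (h : IsAiryAmplitudePair P Q) : ∀ᶠ x in atTop,
    HasDerivAt (fun x => P x + Q x) ((P x - Q x) / (6 * x)) x := by
  filter_upwards [h.hasDerivAt_fst, h.hasDerivAt_snd] with x hP hQ
  exact (hP.add hQ).congr_deriv (by ring)

lemma tendsto_sub (h : IsAiryAmplitudePair P Q) :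
    Tendsto (fun x => P x - Q x) atTop (𝓝 0) := by
  simpa using h.tendsto_fst.sub h.tendsto_snd

lemma tendsto_add (h : IsAiryAmplitudePair P Q) :
    Tendsto (fun x => P x + Q x) atTop (𝓝 2) := by
  simpa [one_add_one_eq_two] using h.tendsto_fst.add h.tendsto_snd

lemma sub_isBigO (h : IsAiryAmplitudePair P Q) :
    (fun x => P x - Q x) =O[atTop] fun x => (x ^ 1)⁻¹ :=
  isBigO_inv_pow_of_hasDerivAt_smul_add 1 (by norm_num) h.hasDerivAt_sub h.tendsto_sub
    (isBigO_inv_pow_succ_div (by simpa using h.tendsto_add.isBigO_one ℝ) 6)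

lemma add_sub_two_isBigO (h : IsAiryAmplitudePair P Q) :
    (fun x => P x + Q x - 2) =O[atTop] fun x => (x ^ 1)⁻¹ :=
  isBigO_inv_pow_of_hasDerivAt 0 (h.hasDerivAt_add.mono fun _ hx => hx.sub_const 2)
    (by simpa using h.tendsto_add.sub_const 2) (isBigO_inv_pow_succ_div h.sub_isBigO 6)

lemma sub_add_inv_isBigO (h : IsAiryAmplitudePair P Q) :
    (fun x => P x - Q x + 1 / 4 * x⁻¹) =O[atTop] fun x => (x ^ 2)⁻¹ := by
  refine isBigO_inv_pow_of_hasDerivAt_smul_add (c := 4 / 3) 2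
    (r := fun x => (P x + Q x - 2) / (6 * x) - 1 / 4 * (x ^ 2)⁻¹) (by norm_num) ?_ ?_
    ((isBigO_inv_pow_succ_div h.add_sub_two_isBigO 6).sub
      ((isBigO_refl _ _).const_mul_left (1 / 4)))
  · filter_upwards [h.hasDerivAt_sub, eventually_ne_atTop 0] with x hD hx
    refine (hD.add ((hasDerivAt_inv hx).const_mul (1 / 4))).congr_deriv ?_
    rw [smul_eq_mul]
    field_simp
    ring
  · simpa only [mul_zero, add_zero, sub_zero] using
      h.tendsto_sub.add (tendsto_inv_atTop_zero.const_mul (1 / 4))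

lemma add_sub_two_sub_inv_isBigO (h : IsAiryAmplitudePair P Q) :
    (fun x => P x + Q x - 2 - 1 / 24 * x⁻¹) =O[atTop] fun x => (x ^ 2)⁻¹ := by
  refine isBigO_inv_pow_of_hasDerivAt 1 ?_ ?_ (isBigO_inv_pow_succ_div h.sub_add_inv_isBigO 6)
  · filter_upwards [h.hasDerivAt_add, eventually_ne_atTop 0] with x hS hx
    refine ((hS.sub_const 2).sub ((hasDerivAt_inv hx).const_mul (1 / 24))).congr_deriv ?_
    field_simp
    ring
  · simpa only [mul_zero, sub_self] using
      (h.tendsto_add.sub_const 2).sub (tendsto_inv_atTop_zero.const_mul (1 / 24))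

lemma sub_add_inv_sub_inv_sq_isBigO (h : IsAiryAmplitudePair P Q) :
    (fun x => P x - Q x + 1 / 4 * x⁻¹ - 35 / 192 * (x ^ 2)⁻¹) =O[atTop] fun x => (x ^ 3)⁻¹ := by
  refine isBigO_inv_pow_of_hasDerivAt_smul_add (c := 4 / 3) 3
    (r := fun x => (P x + Q x - 2 - 1 / 24 * x⁻¹) / (6 * x) + 35 / 96 * (x ^ 3)⁻¹) (by norm_num)
    ?_ ?_ ((isBigO_inv_pow_succ_div h.add_sub_two_sub_inv_isBigO 6).add
      ((isBigO_refl _ _).const_mul_left (35 / 96)))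
  · filter_upwards [h.hasDerivAt_sub, eventually_ne_atTop 0] with x hD hx
    refine ((hD.add ((hasDerivAt_inv hx).const_mul (1 / 4))).sub
      ((hasDerivAt_inv_pow 2 hx).const_mul (35 / 192))).congr_deriv ?_
    rw [smul_eq_mul]
    field_simp
    push_cast
    ring
  · simpa only [mul_zero, add_zero, sub_zero] using
      (h.tendsto_sub.add (tendsto_inv_atTop_zero.const_mul (1 / 4))).sub
      ((tendsto_inv_pow_atTop two_ne_zero).const_mul (35 / 192))

end IsAiryAmplitudePair

noncomputable section ExponentialIntegral

variable {a b x v : ℝ} {φ q : ℝ → ℝ}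

/-- The integrand of `√x * ∫ u in a..b, q u * exp (-(x * φ u))` in the variable `v = √x * (u - a)`,
extended by zero to the half-line: in this variable an exponent with a quadratic zero at `a` has a
limit as `x → ∞`. -/
def laplaceIntegrand (a b : ℝ) (φ q : ℝ → ℝ) (x : ℝ) : ℝ → ℝ :=
  (Ioc 0 ((b - a) * √x)).indicator fun v => q (a + v / √x) * exp (-(x * φ (a + v / √x)))

lemma sqrt_mul_integral_eq_integral_laplaceIntegrand (hab : a ≤ b) (hx : 0 < x) :
    √x * ∫ u in a..b, q u * exp (-(x * φ u)) = ∫ v in Ioi 0, laplaceIntegrand a b φ q x v := by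
  have hsx : 0 < √x := sqrt_pos.2 hx
  have hb : a + (b - a) * √x / √x = b := by rw [mul_div_cancel_right₀ _ hsx.ne']; ring
  unfold laplaceIntegrand
  rw [setIntegral_indicator measurableSet_Ioc, inter_eq_right.2 Ioc_subset_Ioi_self,
    ← intervalIntegral.integral_of_le (mul_nonneg (sub_nonneg.2 hab) hsx.le),
    intervalIntegral.integral_comp_add_div (fun u => q u * exp (-(x * φ u))) hsx.ne' a,
    zero_div, add_zero, hb, smul_eq_mul]

lemma add_div_sqrt_mem_Ioc (hx : 0 < x) (hv : v ∈ Ioc 0 ((b - a) * √x)) :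
    a + v / √x ∈ Ioc a b := by
  have hsx : 0 < √x := sqrt_pos.2 hx
  have hle : v / √x ≤ b - a := (div_le_iff₀ hsx).2 hv.2
  exact ⟨lt_add_of_pos_right a (div_pos hv.1 hsx), by linarith⟩

lemma aestronglyMeasurable_laplaceIntegrand (hφ : ContinuousOn φ (Icc a b))
    (hq : ContinuousOn q (Icc a b)) (hx : 0 < x) :
    AEStronglyMeasurable (laplaceIntegrand a b φ q x) := by
  refine (aestronglyMeasurable_indicator_iff measurableSet_Ioc).2 ?_
  have hmaps : MapsTo (fun v => a + v / √x) (Ioc 0 ((b - a) * √x)) (Icc a b) :=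
    fun v hv => Ioc_subset_Icc_self (add_div_sqrt_mem_Ioc hx hv)
  have hcont : ContinuousOn (fun v => a + v / √x) (Ioc 0 ((b - a) * √x)) := by fun_prop
  exact ((hq.comp hcont hmaps).mul (continuous_exp.comp_continuousOn
    (continuousOn_const.mul (hφ.comp hcont hmaps)).neg)).aestronglyMeasurable measurableSet_Ioc

lemma norm_laplaceIntegrand_le {m M : ℝ} (hM₀ : 0 ≤ M)
    (hφ_ge : ∀ u ∈ Ioc a b, m * (u - a) ^ 2 ≤ φ u) (hM : ∀ u ∈ Ioc a b, ‖q u‖ ≤ M)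
    (hx : 0 < x) (v : ℝ) : ‖laplaceIntegrand a b φ q x v‖ ≤ M * exp (-m * v ^ 2) := by
  unfold laplaceIntegrand
  by_cases hv : v ∈ Ioc 0 ((b - a) * √x)
  · have hu := add_div_sqrt_mem_Ioc hx hv
    have hexponent : m * v ^ 2 ≤ x * φ (a + v / √x) :=
      calc m * v ^ 2 = x * (m * (a + v / √x - a) ^ 2) := by
            rw [add_sub_cancel_left, div_pow, sq_sqrt hx.le]; field_simp
        _ ≤ x * φ (a + v / √x) := mul_le_mul_of_nonneg_left (hφ_ge _ hu) hx.le
    rw [indicator_of_mem hv, norm_mul, Real.norm_of_nonneg (exp_pos _).le]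
    exact mul_le_mul (hM _ hu) (exp_le_exp.2 (by linarith)) (exp_pos _).le hM₀
  · rw [indicator_of_notMem hv, norm_zero]
    exact mul_nonneg hM₀ (exp_pos _).le

lemma tendsto_laplaceIntegrand {c : ℝ} (hab : a < b) (hq : ContinuousWithinAt q (Ioc a b) a)
    (hφ_lim : Tendsto (fun u => φ u / (u - a) ^ 2) (𝓝[>] a) (𝓝 c)) (hv : 0 < v) :
    Tendsto (fun x => laplaceIntegrand a b φ q x v) atTop (𝓝 (q a * exp (-c * v ^ 2))) := by
  have hv_mem : ∀ᶠ x in atTop, v ∈ Ioc 0 ((b - a) * √x) :=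
    ((tendsto_sqrt_atTop.const_mul_atTop (sub_pos.2 hab)).eventually_ge_atTop v).mono
      fun x hx => ⟨hv, hx⟩
  have hpoint : Tendsto (fun x => a + v / √x) atTop (𝓝[Ioc a b] a) := by
    refine tendsto_nhdsWithin_iff.2
      ⟨by simpa using (tendsto_sqrt_atTop.const_div_atTop v).const_add a, ?_⟩
    filter_upwards [eventually_gt_atTop 0, hv_mem] with x hx hvx using add_div_sqrt_mem_Ioc hx hvx
  have hexponent : Tendsto (fun x => x * φ (a + v / √x)) atTop (𝓝 (c * v ^ 2)) := by
    refine ((hφ_lim.comp (hpoint.mono_right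
      (nhdsWithin_mono _ Ioc_subset_Ioi_self))).mul_const (v ^ 2)).congr' ?_
    filter_upwards [eventually_gt_atTop 0] with x hx
    simp only [Function.comp_apply, add_sub_cancel_left, div_pow, sq_sqrt hx.le]
    field_simp
  rw [neg_mul]
  refine ((hq.tendsto.comp hpoint).mul ((continuous_exp.tendsto _).comp hexponent.neg)).congr' ?_
  filter_upwards [hv_mem] with x hvx
  rw [laplaceIntegrand, indicator_of_mem hvx, Function.comp_apply, Function.comp_apply]

lemma tendsto_sqrt_mul_integral_mul_exp_neg {m c : ℝ} (hab : a < b) (hm : 0 < m)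
    (hφ : ContinuousOn φ (Icc a b)) (hq : ContinuousOn q (Icc a b))
    (hφ_ge : ∀ u ∈ Ioc a b, m * (u - a) ^ 2 ≤ φ u)
    (hφ_lim : Tendsto (fun u => φ u / (u - a) ^ 2) (𝓝[>] a) (𝓝 c)) :
    Tendsto (fun x => √x * ∫ u in a..b, q u * exp (-(x * φ u))) atTop
      (𝓝 (q a * (√(π / c) / 2))) := by
  obtain ⟨M, hM⟩ := isCompact_Icc.exists_bound_of_continuousOn hq
  have hM₀ : 0 ≤ M := (norm_nonneg _).trans (hM a (left_mem_Icc.2 hab.le))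
  have hlim : Tendsto (fun x => ∫ v in Ioi 0, laplaceIntegrand a b φ q x v) atTop
      (𝓝 (∫ v in Ioi 0, q a * exp (-c * v ^ 2))) := by
    refine tendsto_integral_filter_of_dominated_convergence (fun v => M * exp (-m * v ^ 2))
      ?_ ?_ ((integrable_exp_neg_mul_sq hm).const_mul M).integrableOn ?_
    · filter_upwards [eventually_gt_atTop 0] with x hx
      exact (aestronglyMeasurable_laplaceIntegrand hφ hq hx).restrict
    · filter_upwards [eventually_gt_atTop 0] with x hx
      exact ae_of_all _ (norm_laplaceIntegrand_le hM₀ hφ_ge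
        (fun u hu => hM u (Ioc_subset_Icc_self hu)) hx)
    · exact (ae_restrict_iff' measurableSet_Ioi).2 (ae_of_all _ fun v hv =>
        tendsto_laplaceIntegrand hab
          ((hq a (left_mem_Icc.2 hab.le)).mono Ioc_subset_Icc_self) hφ_lim hv)
  rw [integral_const_mul, integral_gaussian_Ioi] at hlim
  refine hlim.congr' ?_
  filter_upwards [eventually_gt_atTop 0] with x hx
  exact (sqrt_mul_integral_eq_integral_laplaceIntegrand hab.le hx).symm

lemma hasDerivAt_intervalIntegral_of_continuous {E : Type*} [NormedAddCommGroup E]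
    [NormedSpace ℝ E] {F F' : ℝ → ℝ → E} (hF : ∀ x, Continuous (F x))
    (hF' : Continuous (Function.uncurry F')) (hd : ∀ x u, HasDerivAt (F · u) (F' x u) x)
    (a b x : ℝ) : HasDerivAt (fun x => ∫ u in a..b, F x u) (∫ u in a..b, F' x u) x := by
  obtain ⟨M, hM⟩ := ((isCompact_closedBall x 1).prod
    (isCompact_uIcc (a := a) (b := b))).exists_bound_of_continuousOn hF'.continuousOn
  refine (intervalIntegral.hasDerivAt_integral_of_dominated_loc_of_deriv_le (bound := fun _ => M)
    (Metric.closedBall_mem_nhds x one_pos) ?_ ?_ ?_ ?_ ?_ ?_).2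
  · exact .of_forall fun y => (hF y).aestronglyMeasurable
  · exact (hF x).intervalIntegrable _ _
  · exact (hF'.uncurry_left x).aestronglyMeasurable
  · exact ae_of_all _ fun u hu y hy => hM (y, u) ⟨hy, uIoc_subset_uIcc hu⟩
  · exact intervalIntegrable_const
  · exact ae_of_all _ fun u _ y _ => hd y u

end ExponentialIntegral

noncomputable section PhaseMoment

/-- The drop of the phase `u - u ^ 3 / 3` below its maximum `2 / 3` at `u = 1`. -/
def phaseDrop (u : ℝ) : ℝ := 2 / 3 - u + u ^ 3 / 3

/-- The moment `∫ u in 1..k, u ^ n * exp (-(x * phaseDrop u))`; with `x = t ^ (3 / 2)` these are,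
up to elementary factors, the integrals of `s ^ n * exp (t * s - s ^ 3 / 3)` over `[√t, k * √t]`. -/
def phaseMoment (k : ℝ) (n : ℕ) (x : ℝ) : ℝ := ∫ u in 1..k, u ^ n * exp (-(x * phaseDrop u))

lemma phaseDrop_eq_sq_mul (u : ℝ) : phaseDrop u = (u - 1) ^ 2 * (u + 2) / 3 := by
  unfold phaseDrop; ring

lemma continuous_phaseDrop : Continuous phaseDrop := by
  unfold phaseDrop; fun_prop

lemma hasDerivAt_phaseDrop (u : ℝ) : HasDerivAt phaseDrop (u ^ 2 - 1) u :=
  (((hasDerivAt_id u).const_sub (2 / 3)).add ((hasDerivAt_pow 3 u).div_const 3)).congr_deriv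
    (by norm_num; ring)

lemma phaseDrop_pos {u : ℝ} (hu : 1 < u) : 0 < phaseDrop u := by
  rw [phaseDrop_eq_sq_mul]
  have : 0 < u - 1 := sub_pos.2 hu
  positivity

lemma intervalIntegrable_pow_mul_exp_phaseDrop (k : ℝ) (n : ℕ) (x : ℝ) :
    IntervalIntegrable (fun u => u ^ n * exp (-(x * phaseDrop u))) volume 1 k :=
  ((continuous_pow n).mul
    (continuous_const.mul continuous_phaseDrop).neg.rexp).intervalIntegrable _ _

lemma hasDerivAt_phaseMoment (k : ℝ) (n : ℕ) (x : ℝ) :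
    HasDerivAt (phaseMoment k n)
      (phaseMoment k (n + 1) x - 2 / 3 * phaseMoment k n x - phaseMoment k (n + 3) x / 3) x := by
  have hcont := continuous_phaseDrop
  have hint := fun j => intervalIntegrable_pow_mul_exp_phaseDrop k j x
  refine (hasDerivAt_intervalIntegral_of_continuous (F' := fun x u =>
    u ^ n * (exp (-(x * phaseDrop u)) * -phaseDrop u)) (fun x => by fun_prop)
    (by simp only [Function.uncurry_def]; fun_prop) (fun x u => ?_) 1 k x).congr_deriv ?_
  · exact ((hasDerivAt_mul_const (phaseDrop u)).neg.exp).const_mul (u ^ n)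
  · unfold phaseMoment
    rw [← intervalIntegral.integral_const_mul, ← intervalIntegral.integral_div,
      ← intervalIntegral.integral_sub (hint _) ((hint _).const_mul _),
      ← intervalIntegral.integral_sub ((hint _).sub ((hint _).const_mul _)) ((hint _).div_const _)]
    refine intervalIntegral.integral_congr fun u _ => ?_
    simp only [phaseDrop]
    ring

lemma phaseMoment_integral_by_parts (k : ℝ) (n : ℕ) (x : ℝ) :
    n * phaseMoment k (n - 1) x + x * (phaseMoment k n x - phaseMoment k (n + 2) x) =
      k ^ n * exp (-(x * phaseDrop k)) - 1 := by
  have hint := fun j => intervalIntegrable_pow_mul_exp_phaseDrop k j x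
  have hderiv (u : ℝ) : HasDerivAt (fun u => u ^ n * exp (-(x * phaseDrop u)))
      (n * (u ^ (n - 1) * exp (-(x * phaseDrop u))) + x * (u ^ n * exp (-(x * phaseDrop u)) -
        u ^ (n + 2) * exp (-(x * phaseDrop u)))) u :=
    ((hasDerivAt_pow n u).mul ((hasDerivAt_phaseDrop u).const_mul x).neg.exp).congr_deriv
      (by simp only [Pi.neg_apply]; ring)
  have hftc := intervalIntegral.integral_eq_sub_of_hasDerivAt (fun u _ => hderiv u)
    (((hint _).const_mul _).add (((hint _).sub (hint _)).const_mul _))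
  rw [intervalIntegral.integral_add ((hint _).const_mul _) (((hint _).sub (hint _)).const_mul _),
    intervalIntegral.integral_const_mul, intervalIntegral.integral_const_mul,
    intervalIntegral.integral_sub (hint _) (hint _)] at hftc
  simpa [phaseMoment, phaseDrop_eq_sq_mul 1] using hftc

lemma hasDerivAt_phaseMoment_zero (k : ℝ) {x : ℝ} (hx : x ≠ 0) :
    HasDerivAt (phaseMoment k 0) (2 / 3 * (phaseMoment k 1 x - phaseMoment k 0 x) +
      (k * exp (-(x * phaseDrop k)) - 1 - phaseMoment k 0 x) / (3 * x)) x := by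
  refine (hasDerivAt_phaseMoment k 0 x).congr_deriv ?_
  have hparts := phaseMoment_integral_by_parts k 1 x
  simp only [Nat.cast_one, one_mul, pow_one, Nat.reduceSub, Nat.reduceAdd] at hparts ⊢
  field_simp
  linear_combination hparts

lemma hasDerivAt_phaseMoment_one (k : ℝ) {x : ℝ} (hx : x ≠ 0) :
    HasDerivAt (phaseMoment k 1) (2 / 3 * (phaseMoment k 0 x - phaseMoment k 1 x) +
      ((k ^ 2 - 2) * exp (-(x * phaseDrop k)) + 1 - 2 * phaseMoment k 1 x) / (3 * x)) x := by
  refine (hasDerivAt_phaseMoment k 1 x).congr_deriv ?_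
  have hparts₀ := phaseMoment_integral_by_parts k 0 x
  have hparts₂ := phaseMoment_integral_by_parts k 2 x
  simp only [Nat.cast_zero, Nat.cast_ofNat, zero_mul, zero_add, one_mul, pow_zero, Nat.reduceSub,
    Nat.reduceAdd] at hparts₀ hparts₂ ⊢
  field_simp
  linear_combination hparts₂ - 2 * hparts₀

lemma tendsto_sqrt_mul_phaseMoment {k : ℝ} (hk : 1 < k) (n : ℕ) :
    Tendsto (fun x => √x * phaseMoment k n x) atTop (𝓝 (√π / 2)) := by
  have hlim : Tendsto (fun u => phaseDrop u / (u - 1) ^ 2) (𝓝[>] 1) (𝓝 1) := by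
    have hcont : ContinuousAt (fun u : ℝ => (u + 2) / 3) 1 := by fun_prop
    have hval : Tendsto (fun u : ℝ => (u + 2) / 3) (𝓝[>] 1) (𝓝 1) := by
      simpa [show (1 + 2 : ℝ) = 3 by norm_num] using hcont.tendsto.mono_left nhdsWithin_le_nhds
    refine hval.congr' ?_
    filter_upwards [self_mem_nhdsWithin] with u (hu : 1 < u)
    have : u - 1 ≠ 0 := (sub_pos.2 hu).ne'
    rw [phaseDrop_eq_sq_mul]
    field_simp
  have hge : ∀ u ∈ Ioc 1 k, 1 * (u - 1) ^ 2 ≤ phaseDrop u := fun u hu => by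
    rw [phaseDrop_eq_sq_mul]
    nlinarith [hu.1, mul_nonneg (sq_nonneg (u - 1)) (sub_pos.2 hu.1).le]
  simpa [phaseMoment] using tendsto_sqrt_mul_integral_mul_exp_neg hk one_pos
    continuous_phaseDrop.continuousOn (continuous_pow n).continuousOn hge hlim

end PhaseMoment

/-- The integral `∫ s in √t..k * √t, exp (t * s - s ^ 3 / 3) * (y t * s - y' t)` in the variable
`x = t ^ (3 / 2)`, where `P` and `Q` are the normalised amplitudes of `y` and `-y'`. -/
noncomputable def connectionFun (k : ℝ) (P Q : ℝ → ℝ) (x : ℝ) : ℝ :=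
  √x / (2 * √π) * (P x * phaseMoment k 1 x + Q x * phaseMoment k 0 x)

namespace IsAiryAmplitudePair

variable {P Q : ℝ → ℝ} {k : ℝ}

-- The moments cancel: only their boundary terms survive, multiplied by the amplitudes.
lemma hasDerivAt_connectionFun (h : IsAiryAmplitudePair P Q) (k : ℝ) : ∀ᶠ x in atTop,
    HasDerivAt (connectionFun k P Q) (x ^ (-(1 : ℝ) / 2) * (1 / (6 * √π) *
      (P x - Q x + exp (-(x * phaseDrop k)) * ((k ^ 2 - 2) * P x + k * Q x)))) x := by
  filter_upwards [h.hasDerivAt_fst, h.hasDerivAt_snd, eventually_gt_atTop 0] with x hP hQ hx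
  refine (((hasDerivAt_sqrt hx.ne').div_const (2 * √π)).mul
    ((hP.mul (hasDerivAt_phaseMoment_one k hx.ne')).add
      (hQ.mul (hasDerivAt_phaseMoment_zero k hx.ne')))).congr_deriv ?_
  have hsqrt : x ^ (-(1 : ℝ) / 2) = (√x)⁻¹ := by rw [neg_div, rpow_neg hx.le, sqrt_eq_rpow]
  have hsq : √x ^ 2 = x := sq_sqrt hx.le
  have hsx : √x ≠ 0 := (sqrt_pos.2 hx).ne'
  simp only [Pi.add_apply, Pi.mul_apply]
  rw [hsqrt]
  generalize √x = r at hsq hsx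
  subst hsq
  field_simp
  ring

lemma tendsto_connectionFun (h : IsAiryAmplitudePair P Q) (hk : 1 < k) :
    Tendsto (connectionFun k P Q) atTop (𝓝 (1 / 2)) := by
  have hlim := ((h.tendsto_fst.mul (tendsto_sqrt_mul_phaseMoment hk 1)).add
    (h.tendsto_snd.mul (tendsto_sqrt_mul_phaseMoment hk 0))).div_const (2 * √π)
  rw [show (1 * (√π / 2) + 1 * (√π / 2)) / (2 * √π) = 1 / 2 by field_simp; norm_num] at hlim
  exact hlim.congr fun x => by unfold connectionFun; ring

lemma exp_neg_mul_phaseDrop_mul_isBigO (h : IsAiryAmplitudePair P Q) (hk : 1 < k) (n : ℕ) :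
    (fun x => exp (-(x * phaseDrop k)) * ((k ^ 2 - 2) * P x + k * Q x)) =O[atTop]
      fun x => (x ^ n)⁻¹ := by
  have hbounded : (fun x => (k ^ 2 - 2) * P x + k * Q x) =O[atTop] fun _ => (1 : ℝ) :=
    ((h.tendsto_fst.const_mul _).add (h.tendsto_snd.const_mul _)).isBigO_one ℝ
  simpa only [mul_one] using (isBigO_exp_neg_mul_inv_pow (phaseDrop_pos hk) n).mul hbounded

lemma connectionFun_sub_expansion_isBigO (h : IsAiryAmplitudePair P Q) (hk : 1 < k) :
    (fun x => connectionFun k P Q x - (1 / 2 + 1 / (12 * √π) * x ^ (-(1 : ℝ) / 2) -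
      35 / (1728 * √π) * x ^ (-(3 : ℝ) / 2))) =O[atTop] fun x => x ^ (-(5 : ℝ) / 2) := by
  have hrpow {a : ℝ} (ha : 0 < a) : Tendsto (fun x : ℝ => x ^ (-a / 2)) atTop (𝓝 0) := by
    simpa only [neg_div] using tendsto_rpow_neg_atTop (half_pos ha)
  have hderiv : ∀ᶠ x in atTop, HasDerivAt (fun x => connectionFun k P Q x - (1 / 2 +
      1 / (12 * √π) * x ^ (-(1 : ℝ) / 2) - 35 / (1728 * √π) * x ^ (-(3 : ℝ) / 2)))
      (x ^ (-(1 : ℝ) / 2) * (1 / (6 * √π) * (P x - Q x + 1 / 4 * x⁻¹ - 35 / 192 * (x ^ 2)⁻¹ +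
        exp (-(x * phaseDrop k)) * ((k ^ 2 - 2) * P x + k * Q x)))) x := by
    filter_upwards [h.hasDerivAt_connectionFun k, eventually_gt_atTop 0] with x hG hx
    refine (hG.sub ((((hasDerivAt_rpow_const (.inl hx.ne')).const_mul _).const_add _).sub
      ((hasDerivAt_rpow_const (.inl hx.ne')).const_mul _))).congr_deriv ?_
    rw [show -(3 : ℝ) / 2 - 1 = -1 / 2 - (2 : ℕ) by norm_num, rpow_sub_natCast hx.ne',
      rpow_sub_one hx.ne']
    field_simp
    ring
  refine isBigO_of_hasDerivAt_isBigO hderiv ((eventually_gt_atTop 0).mono fun x hx =>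
    hasDerivAt_rpow_const (.inl hx.ne')) ?_ ?_ (hrpow (by norm_num)) ?_
  · filter_upwards [eventually_ge_atTop 0] with x hx
    exact mul_nonpos_of_nonpos_of_nonneg (by norm_num) (rpow_nonneg hx _)
  · convert (h.tendsto_connectionFun hk).sub
      ((((hrpow one_pos).const_mul (1 / (12 * √π))).const_add (1 / 2)).sub
        ((hrpow three_pos).const_mul (35 / (1728 * √π)))) using 2
    ring
  · refine (((isBigO_refl (fun x : ℝ => x ^ (-(1 : ℝ) / 2)) _).mul
      ((h.sub_add_inv_sub_inv_sq_isBigO.add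
        (h.exp_neg_mul_phaseDrop_mul_isBigO hk 3)).const_mul_left _)).congr' .rfl ?_).trans
      ((isBigO_refl _ _).const_mul_right (c := -(5 : ℝ) / 2) (by norm_num))
    filter_upwards [eventually_ne_atTop 0] with x hx
    rw [show -(5 : ℝ) / 2 - 1 = -1 / 2 - (3 : ℕ) by norm_num, rpow_sub_natCast hx]
    exact (div_eq_mul_inv _ _).symm

end IsAiryAmplitudePair

noncomputable section AiryAsymptotics

/-- The leading term of the Airy function `Ai` at infinity. -/
def airyLeading (t : ℝ) : ℝ :=
  (2 * √π)⁻¹ * t ^ (-(1 : ℝ) / 4) * exp (-(2 / 3) * t ^ ((3 : ℝ) / 2))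

/-- The leading term of the derivative `Ai'` of the Airy function at infinity. -/
def airyDerivLeading (t : ℝ) : ℝ :=
  -(2 * √π)⁻¹ * t ^ ((1 : ℝ) / 4) * exp (-(2 / 3) * t ^ ((3 : ℝ) / 2))

variable {y y' : ℝ → ℝ} {t : ℝ}

lemma hasDerivAt_mul_rpow_mul_exp_neg (c a : ℝ) (ht : 0 < t) :
    HasDerivAt (fun t => c * t ^ a * exp (-(2 / 3) * t ^ ((3 : ℝ) / 2)))
      ((a / t - √t) * (c * t ^ a * exp (-(2 / 3) * t ^ ((3 : ℝ) / 2)))) t := by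
  refine (((hasDerivAt_rpow_const (.inl ht.ne')).const_mul c).mul
    ((hasDerivAt_rpow_const (.inl ht.ne')).const_mul _).exp).congr_deriv ?_
  rw [rpow_sub_one ht.ne', show (3 : ℝ) / 2 - 1 = 1 / 2 by norm_num, ← sqrt_eq_rpow]
  field_simp
  ring

lemma tendsto_mul_rpow_mul_exp_neg (c a : ℝ) :
    Tendsto (fun t => c * t ^ a * exp (-(2 / 3) * t ^ ((3 : ℝ) / 2))) atTop (𝓝 0) := by
  have h := ((tendsto_rpow_mul_exp_neg_mul_atTop_nhds_zero (2 / 3 * a) (2 / 3)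
    (by norm_num)).comp (tendsto_rpow_atTop (y := 3 / 2) (by norm_num))).const_mul c
  rw [mul_zero] at h
  refine h.congr' ?_
  filter_upwards [eventually_ge_atTop 0] with t ht
  rw [Function.comp_apply, ← rpow_mul ht, mul_assoc]
  ring_nf

lemma hasDerivAt_airyLeading (ht : 0 < t) :
    HasDerivAt airyLeading ((-(1 : ℝ) / 4 / t - √t) * airyLeading t) t :=
  hasDerivAt_mul_rpow_mul_exp_neg _ _ ht

lemma hasDerivAt_airyDerivLeading (ht : 0 < t) :
    HasDerivAt airyDerivLeading ((1 / 4 / t - √t) * airyDerivLeading t) t :=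
  hasDerivAt_mul_rpow_mul_exp_neg _ _ ht

lemma tendsto_airyLeading : Tendsto airyLeading atTop (𝓝 0) :=
  tendsto_mul_rpow_mul_exp_neg _ _

lemma tendsto_airyDerivLeading : Tendsto airyDerivLeading atTop (𝓝 0) :=
  tendsto_mul_rpow_mul_exp_neg _ _

lemma airyLeading_pos (ht : 0 < t) : 0 < airyLeading t := by
  unfold airyLeading; positivity

lemma airyDerivLeading_eq_neg_sqrt_mul (ht : 0 < t) : airyDerivLeading t = -√t * airyLeading t := by
  have hpow : t ^ ((1 : ℝ) / 4) = √t * t ^ (-(1 : ℝ) / 4) := by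
    rw [sqrt_eq_rpow, ← rpow_add ht]; norm_num
  rw [airyDerivLeading, airyLeading, hpow]
  ring

lemma airyDerivLeading_neg (ht : 0 < t) : airyDerivLeading t < 0 := by
  rw [airyDerivLeading_eq_neg_sqrt_mul ht]
  exact mul_neg_of_neg_of_pos (neg_neg_of_pos (sqrt_pos.2 ht)) (airyLeading_pos ht)

lemma tendsto_div_airyLeading (h : y ~[atTop] airyLeading) :
    Tendsto (y / airyLeading) atTop (𝓝 1) :=
  (isEquivalent_iff_tendsto_one ((eventually_gt_atTop 0).mono fun _ ht =>
    (airyLeading_pos ht).ne')).1 h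

lemma tendsto_zero_deriv_of_isEquivalent_airyLeading (hy : ∀ᶠ t in atTop, HasDerivAt y (y' t) t)
    (hy' : ∀ᶠ t in atTop, HasDerivAt y' (t * y t) t) (h : y ~[atTop] airyLeading) :
    Tendsto y' atTop (𝓝 0) := by
  have hpos : ∀ᶠ t in atTop, 0 < y t := by
    filter_upwards [(tendsto_div_airyLeading h).eventually_const_lt one_pos,
      eventually_gt_atTop 0] with t hquot ht
    exact (div_pos_iff_of_pos_right (airyLeading_pos ht)).1 hquot
  obtain ⟨T, hT⟩ := eventually_atTop.1
    (hy.and (hy'.and (hpos.and (eventually_ge_atTop 0))))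
  have hmono : MonotoneOn y' (Ici T) :=
    monotoneOn_of_hasDerivWithinAt_nonneg (convex_Ici T)
      (fun t ht => (hT t ht).2.1.continuousAt.continuousWithinAt)
      (fun t ht => (hT t (interior_subset ht)).2.1.hasDerivWithinAt)
      fun t ht => mul_nonneg (hT t (interior_subset ht)).2.2.2 (hT t (interior_subset ht)).2.2.1.le
  exact tendsto_zero_of_monotoneOn_hasDerivAt (fun t ht => (hT t ht).1) hmono
    (h.symm.tendsto_nhds tendsto_airyLeading)

lemma tendsto_deriv_div_airyDerivLeading (hy : ∀ᶠ t in atTop, HasDerivAt y (y' t) t)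
    (hy' : ∀ᶠ t in atTop, HasDerivAt y' (t * y t) t) (h : y ~[atTop] airyLeading) :
    Tendsto (y' / airyDerivLeading) atTop (𝓝 1) := by
  have hcorr : Tendsto (fun t => 1 - (4 * (t * √t))⁻¹) atTop (𝓝 1) := by
    simpa using ((tendsto_id.atTop_mul_atTop₀ tendsto_sqrt_atTop).const_mul_atTop
      four_pos).inv_tendsto_atTop.const_sub 1
  have hratio : ∀ᶠ t in atTop, (1 / 4 / t - √t) * airyDerivLeading t =
      t * airyLeading t * (1 - (4 * (t * √t))⁻¹) := by
    filter_upwards [eventually_gt_atTop 0] with t ht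
    have hsq : √t * √t = t := mul_self_sqrt ht.le
    have hst : 0 < √t := sqrt_pos.2 ht
    rw [airyDerivLeading_eq_neg_sqrt_mul ht]
    generalize √t = r at hsq hst
    subst hsq
    field_simp
    ring
  refine HasDerivAt.lhopital_zero_atTop hy' ((eventually_gt_atTop 0).mono fun t ht =>
    hasDerivAt_airyDerivLeading ht) ?_
    (tendsto_zero_deriv_of_isEquivalent_airyLeading hy hy' h) tendsto_airyDerivLeading ?_
  · filter_upwards [hratio, eventually_gt_atTop 0, hcorr.eventually_ne one_ne_zero]
      with t hrt ht hne
    exact hrt.trans_ne (mul_ne_zero (mul_pos ht (airyLeading_pos ht)).ne' hne)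
  · have hlim := (tendsto_div_airyLeading h).div hcorr one_ne_zero
    rw [div_one] at hlim
    refine hlim.congr' ?_
    filter_upwards [hratio, eventually_gt_atTop 0] with t hrt ht
    refine .trans ?_ (congrArg (t * y t / ·) hrt.symm)
    rw [mul_assoc, mul_div_mul_left _ _ ht.ne', div_mul_eq_div_div]
    rfl

lemma hasDerivAt_div_airyLeading (ht : 0 < t) (hy : HasDerivAt y (y' t) t) :
    HasDerivAt (y / airyLeading) ((y / airyLeading) t / (4 * t) +
      √t * ((y / airyLeading) t - (y' / airyDerivLeading) t)) t := by
  refine (hy.div (hasDerivAt_airyLeading ht) (airyLeading_pos ht).ne').congr_deriv ?_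
  have hL := (airyLeading_pos ht).ne'
  have hst : √t ≠ 0 := (sqrt_pos.2 ht).ne'
  simp only [Pi.div_apply, airyDerivLeading_eq_neg_sqrt_mul ht]
  field_simp
  ring

lemma hasDerivAt_div_airyDerivLeading (ht : 0 < t) (hy' : HasDerivAt y' (t * y t) t) :
    HasDerivAt (y' / airyDerivLeading) (-(y' / airyDerivLeading) t / (4 * t) +
      √t * ((y' / airyDerivLeading) t - (y / airyLeading) t)) t := by
  refine (hy'.div (hasDerivAt_airyDerivLeading ht) (airyDerivLeading_neg ht).ne).congr_deriv ?_
  have hL := (airyLeading_pos ht).ne'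
  have hsq : √t * √t = t := mul_self_sqrt ht.le
  have hst : √t ≠ 0 := (sqrt_pos.2 ht).ne'
  simp only [Pi.div_apply, airyDerivLeading_eq_neg_sqrt_mul ht]
  generalize airyLeading t = l, y t = a, y' t = b, √t = r at *
  subst hsq
  field_simp
  ring

lemma hasDerivAt_comp_rpow_two_thirds {f : ℝ → ℝ} {a b x : ℝ} (hx : 0 < x)
    (hf : HasDerivAt f (a / (4 * x ^ ((2 : ℝ) / 3)) + √(x ^ ((2 : ℝ) / 3)) * b)
      (x ^ ((2 : ℝ) / 3))) :
    HasDerivAt (fun x => f (x ^ ((2 : ℝ) / 3))) (a / (6 * x) + 2 / 3 * b) x := by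
  have hpow : x ^ ((2 : ℝ) / 3) ≠ 0 := (rpow_pos_of_pos hx _).ne'
  have hsqrt : √(x ^ ((2 : ℝ) / 3)) * x ^ ((2 : ℝ) / 3) = x := by
    rw [sqrt_eq_rpow, ← rpow_mul hx.le, ← rpow_add hx]
    norm_num
  refine (hf.comp x (hasDerivAt_rpow_const (.inl hx.ne'))).congr_deriv ?_
  rw [rpow_sub_one hx.ne']
  field_simp
  linear_combination 48 * b * hsqrt

lemma isAiryAmplitudePair_of_isEquivalent (hy : ∀ᶠ t in atTop, HasDerivAt y (y' t) t)
    (hy' : ∀ᶠ t in atTop, HasDerivAt y' (t * y t) t) (h : y ~[atTop] airyLeading) :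
    IsAiryAmplitudePair (fun x => (y / airyLeading) (x ^ ((2 : ℝ) / 3)))
      (fun x => (y' / airyDerivLeading) (x ^ ((2 : ℝ) / 3))) := by
  have hpow : Tendsto (fun x : ℝ => x ^ ((2 : ℝ) / 3)) atTop atTop :=
    tendsto_rpow_atTop (by norm_num)
  refine ⟨?_, ?_, (tendsto_div_airyLeading h).comp hpow,
    (tendsto_deriv_div_airyDerivLeading hy hy' h).comp hpow⟩
  · filter_upwards [hpow.eventually hy, eventually_gt_atTop 0] with x hyx hx
    exact hasDerivAt_comp_rpow_two_thirds hx
      (hasDerivAt_div_airyLeading (rpow_pos_of_pos hx _) hyx)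
  · filter_upwards [hpow.eventually hy', eventually_gt_atTop 0] with x hyx hx
    exact hasDerivAt_comp_rpow_two_thirds hx
      (hasDerivAt_div_airyDerivLeading (rpow_pos_of_pos hx _) hyx)

lemma integral_exp_mul_eq_phaseMoment (ht : 0 < t) (α β k : ℝ) :
    ∫ s in √t..k * √t, exp (t * s - s ^ 3 / 3) * (α * s - β) =
      exp (2 / 3 * t ^ ((3 : ℝ) / 2)) * (α * t * phaseMoment k 1 (t ^ ((3 : ℝ) / 2)) -
        β * √t * phaseMoment k 0 (t ^ ((3 : ℝ) / 2))) := by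
  have hint := fun j => intervalIntegrable_pow_mul_exp_phaseDrop k j (t ^ ((3 : ℝ) / 2))
  have hsq : √t ^ 2 = t := sq_sqrt ht.le
  have hcube : t ^ ((3 : ℝ) / 2) = √t ^ 3 := by
    rw [sqrt_eq_rpow, ← rpow_natCast, ← rpow_mul ht.le]; norm_num
  have hkernel (u : ℝ) : exp (t * (u * √t) - (u * √t) ^ 3 / 3) =
      exp (2 / 3 * t ^ ((3 : ℝ) / 2)) * exp (-(t ^ ((3 : ℝ) / 2) * phaseDrop u)) := by
    rw [← exp_add, hcube, phaseDrop]
    congr 1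
    linear_combination -u * √t * hsq
  have hsubst := intervalIntegral.mul_integral_comp_mul_right (a := 1) (b := k) (c := √t)
    (f := fun s => exp (t * s - s ^ 3 / 3) * (α * s - β))
  rw [one_mul] at hsubst
  rw [← hsubst]
  unfold phaseMoment
  rw [← intervalIntegral.integral_const_mul, ← intervalIntegral.integral_const_mul,
    ← intervalIntegral.integral_const_mul,
    ← intervalIntegral.integral_sub ((hint _).const_mul _) ((hint _).const_mul _),
    ← intervalIntegral.integral_const_mul]
  refine intervalIntegral.integral_congr fun u _ => ?_
  simp only [hkernel]
  linear_combination α * u * exp (2 / 3 * t ^ ((3 : ℝ) / 2)) *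
    exp (-(t ^ ((3 : ℝ) / 2) * phaseDrop u)) * hsq

lemma integral_eq_connectionFun (y y' : ℝ → ℝ) (k : ℝ) (ht : 0 < t) :
    ∫ s in √t..k * √t, exp (t * s - s ^ 3 / 3) * (y t * s - y' t) =
      connectionFun k (fun x => (y / airyLeading) (x ^ ((2 : ℝ) / 3)))
        (fun x => (y' / airyDerivLeading) (x ^ ((2 : ℝ) / 3))) (t ^ ((3 : ℝ) / 2)) := by
  have hinv : (t ^ ((3 : ℝ) / 2)) ^ ((2 : ℝ) / 3) = t := by
    rw [← rpow_mul ht.le]; norm_num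
  have hscale : √(t ^ ((3 : ℝ) / 2)) / (2 * √π) =
      exp (2 / 3 * t ^ ((3 : ℝ) / 2)) * t * airyLeading t := by
    have hpow : √(t ^ ((3 : ℝ) / 2)) = t * t ^ (-(1 : ℝ) / 4) := by
      rw [sqrt_eq_rpow, ← rpow_mul ht.le, ← rpow_one_add' ht.le (by norm_num)]; norm_num
    rw [hpow, airyLeading, neg_mul, exp_neg]
    field_simp
  have hL := (airyLeading_pos ht).ne'
  have hsq : √t * √t = t := mul_self_sqrt ht.le
  have hst : √t ≠ 0 := (sqrt_pos.2 ht).ne'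
  simp only [integral_exp_mul_eq_phaseMoment ht, connectionFun, hscale, hinv, Pi.div_apply,
    airyDerivLeading_eq_neg_sqrt_mul ht]
  field_simp
  linear_combination -(y' t * phaseMoment k 0 (t ^ ((3 : ℝ) / 2))) * hsq

end AiryAsymptotics

theorem stmt18_general {Ai Ai' : ℝ → ℝ} {k : ℝ} (hk : 1 < k)
    (hAiD : ∀ᶠ t in atTop, HasDerivAt Ai (Ai' t) t)
    (hAiODE : ∀ᶠ t in atTop, HasDerivAt Ai' (t * Ai t) t)
    (hAi : Ai ~[atTop] fun t =>
      (2 * √π)⁻¹ * t ^ (-(1 : ℝ) / 4) * exp (-(2 / 3) * t ^ ((3 : ℝ) / 2))) :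
    (fun t =>
        (-(∫ s in √t..(k * √t), exp (t * s - s ^ 3 / 3) * (Ai t * s - Ai' t)))
          - (-1 / 2 - (1 / (12 * √π)) * t ^ (-(3 : ℝ) / 4)
              + (35 / (1728 * √π)) * t ^ (-(9 : ℝ) / 4)))
      =O[atTop] (fun t => t ^ (-(15 : ℝ) / 4)) := by
  have hpair := isAiryAmplitudePair_of_isEquivalent hAiD hAiODE hAi
  have hexpansion := (hpair.connectionFun_sub_expansion_isBigO hk).neg_left.comp_tendsto
    (tendsto_rpow_atTop (y := 3 / 2) (by norm_num))
  refine hexpansion.congr' ?_ ?_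
  · filter_upwards [eventually_gt_atTop 0] with t ht
    rw [Function.comp_apply, ← integral_eq_connectionFun Ai Ai' k ht, ← rpow_mul ht.le,
      ← rpow_mul ht.le, show (3 : ℝ) / 2 * (-1 / 2) = -3 / 4 by norm_num,
      show (3 : ℝ) / 2 * (-3 / 2) = -9 / 4 by norm_num]
    ring
  · filter_upwards [eventually_ge_atTop 0] with t ht
    rw [Function.comp_apply, ← rpow_mul ht]
    norm_num

/-- Laplace-method asymptotics: for fixed `k > 1`, the quantity
`C₂(t) − Υ₂(k) ≈ −∫_{√t}^{k√t} e^{ts − s³/3}(Ai(t)s − Ai'(t)) ds` has the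
expansion `−1/2 − (1/(12√π))t^{−3/4} + (35/(1728√π))t^{−9/4} + O(t^{−15/4})`
as `t → ∞`, given the standard Airy asymptotics with relative error
`O(t^{−3/2})`. -/
theorem stmt18 (Ai Ai' : ℝ → ℝ) (k : ℝ) (hk : 1 < k)
    (hAiD : ∀ t, HasDerivAt Ai (Ai' t) t)
    (hAiODE : ∀ t, HasDerivAt Ai' (t * Ai t) t)
    (hAi : (fun t => Ai t /
        ((2 * Real.sqrt π)⁻¹ * t ^ (-(1 : ℝ) / 4) * Real.exp (-(2 / 3) * t ^ ((3 : ℝ) / 2))) - 1)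
      =O[atTop] (fun t => t ^ (-(3 : ℝ) / 2)))
    (hAi' : (fun t => Ai' t /
        (-(2 * Real.sqrt π)⁻¹ * t ^ ((1 : ℝ) / 4) * Real.exp (-(2 / 3) * t ^ ((3 : ℝ) / 2))) - 1)
      =O[atTop] (fun t => t ^ (-(3 : ℝ) / 2))) :
    (fun t =>
        (-(∫ s in Real.sqrt t..(k * Real.sqrt t),
            Real.exp (t * s - s ^ 3 / 3) * (Ai t * s - Ai' t)))
          - (-1 / 2 - (1 / (12 * Real.sqrt π)) * t ^ (-(3 : ℝ) / 4)
              + (35 / (1728 * Real.sqrt π)) * t ^ (-(9 : ℝ) / 4)))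
      =O[atTop] (fun t => t ^ (-(15 : ℝ) / 4)) :=
  stmt18_general hk (.of_forall hAiD) (.of_forall hAiODE) (isEquivalent_of_isBigO_div_sub_one hAi
    (by simpa only [neg_div] using tendsto_rpow_neg_atTop (y := 3 / 2) (by norm_num)))
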